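/- Let R be a commutative Noetherian ring, 𝔞 a proper ideal of R, t ≥ 0 an integer, and M an R-module such that Ext^i_R(R/𝔞, M) is a finitely generated R-module for every i ≥ 0. If H^i_𝔞(M) belongs to FD_{≤0} for every integer 0 ≤ i < t (in particular, if dim_R H^i_𝔞(M) ≤ 0 for all i < t, or if dim R ≤ 1), then H^i_𝔞(M) is 𝔞-cofinite for every 0 ≤ i < t and the R-module Hom_R(R/𝔞, H^t_𝔞(M)) is finitely generated. -/

import Mathlib

open CategoryTheory

universe u

/-- The `R`-module `Ext^i_R(N, M)` for two `R`-modules (objects of `ModuleCat R`). -/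
noncomputable def extObj {R : Type u} [CommRing R] (N M : ModuleCat.{u} R) (i : ℕ) :
    ModuleCat.{u} R :=
  ((Ext R (ModuleCat.{u} R) i).obj (Opposite.op N)).obj M

/-- The `R`-module `Ext^i_R(R/𝔞, M)`. -/
noncomputable def extIdeal {R : Type u} [CommRing R] (𝔞 : Ideal R) (i : ℕ)
    (M : ModuleCat.{u} R) : ModuleCat.{u} R :=
  extObj (ModuleCat.of R (R ⧸ 𝔞)) M i

/-- An `R`-module `M` is `𝔞`-cofinite if `Supp_R M ⊆ V(𝔞)` and `Ext^i_R(R/𝔞, M)` is a finitely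
generated `R`-module for every `i ≥ 0`. -/
def IsCofinite {R : Type u} [CommRing R] (𝔞 : Ideal R) (M : ModuleCat.{u} R) : Prop :=
  Module.support R M ⊆ PrimeSpectrum.zeroLocus (𝔞 : Set R) ∧
    ∀ i : ℕ, Module.Finite R (extIdeal 𝔞 i M)

/-- The Krull dimension `dim_R M` of an `R`-module `M`: the Krull dimension of its support,
i.e. the supremum of `dim R/𝔭` over primes `𝔭` in the support of `M`. -/
noncomputable def moduleDim (R : Type u) [CommRing R] (M : Type u) [AddCommGroup M]
    [Module R M] : WithBot ℕ∞ :=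
  Order.krullDim (Module.support R M)

/-- An `R`-module `M` is in `FD_{≤n}` if there is a finitely generated submodule `N ⊆ M`
with `dim_R (M/N) ≤ n`. -/
def MemFD (R : Type u) [CommRing R] (n : ℕ) (M : Type u) [AddCommGroup M] [Module R M] : Prop :=
  ∃ N : Submodule R M, N.FG ∧ moduleDim R (M ⧸ N) ≤ (n : WithBot ℕ∞)

/-- An `R`-module `M` is `𝔞`-torsion if every element is annihilated by some power of `𝔞`. -/
def IsTorsionIdeal {R : Type u} [CommRing R] (𝔞 : Ideal R) (M : Type u) [AddCommGroup M]
    [Module R M] : Prop :=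
  ∀ m : M, ∃ n : ℕ, ∀ a ∈ 𝔞 ^ n, a • m = 0

/-- The arithmetic rank of an ideal `𝔞`: the least `n` such that there exist `a₁, …, aₙ ∈ R`
with `Rad (a₁, …, aₙ) = Rad 𝔞`. -/
noncomputable def arithRank {R : Type u} [CommRing R] (𝔞 : Ideal R) : ℕ :=
  sInf {n : ℕ | ∃ f : Fin n → R, (Ideal.span (Set.range f)).radical = 𝔞.radical}

/-!
As the filtered colimit of the functors `Ext^i(R/𝔞^n, -)`, local cohomology is a `δ`-functor with
`H^0_𝔞 = Γ_𝔞`, and `H^i_𝔞` vanishes on injectives for `i > 0`. By the Artin–Rees lemma the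
`𝔞`-torsion submodule of an injective module is injective, hence a direct summand. So `𝔞`-torsion
modules have no local cohomology in positive degrees, and a module without `𝔞`-torsion embeds into
an injective `E` without `𝔞`-torsion. Both `H^i_𝔞(E)` and `Ext^i(R/𝔞, E)` vanish for all `i`.

Induct on `t`. If `H^0_𝔞(M)` is cofinite, then `M/Γ_𝔞(M)` inherits the finiteness of `Ext` in
positive degrees, and the cokernel of an embedding of `M/Γ_𝔞(M)` into some `E` as above has the
`Ext` and the local cohomology of `M/Γ_𝔞(M)` shifted by one degree. Since
`Hom(R/𝔞, H^0_𝔞(M)) = Hom(R/𝔞, M)` is finitely generated, everything reduces to showing that an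
`𝔞`-torsion module `H` in `FD_{≤0}` is cofinite if `Hom(R/𝔞, H)` is finitely generated.

Dividing by a finitely generated submodule, one may assume that `H` has dimension at most `0`. Then
`(0 :_H 𝔞)` has finite length, so `H` is artinian by Melkersson's criterion. If some submodule of
`H` violates the claim, take a minimal one, `K`: multiplication by some `x ∈ 𝔞` is nonzero on `K`,
so either its kernel and image are proper submodules of `K`, or it is surjective on `K` and zero on
`Ext^i(R/𝔞, K)`, which is then a quotient of `Ext^i(R/𝔞, ker x)`.

When `dim R ≤ 1`, choose `n` with `(0 :_R 𝔞^k) ⊆ (0 :_R 𝔞^n)` for all `k`. If `H` is `𝔞`-torsion and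
`(0 :_H 𝔞)` is finitely generated, then so is `(0 :_H 𝔞^n)`, and `H/(0 :_H 𝔞^n)` vanishes at the
minimal primes of `R`, so `H` belongs to `FD_{≤0}`.
-/

section Comparison

open Limits HomologicalComplex

variable {R : Type*} [Ring R] {C : Type*} [Category* C] [Abelian C] [Linear R C] {X X' Y : C}

lemma exact_toCycles_homologyπ (K : CochainComplex (ModuleCat R) ℕ) (n : ℕ) :
    Function.Exact (K.toCycles ((ComplexShape.up ℕ).prev n) n).hom (K.homologyπ n).hom :=
  (ShortComplex.ShortExact.moduleCat_exact_iff_function_exact _).1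
    (ShortComplex.exact_of_g_is_cokernel
      (ShortComplex.mk _ (K.homologyπ n) (K.toCycles_comp_homologyπ _ n))
      (K.homologyIsCokernel _ n rfl))

lemma homologyπ_surjective (K : CochainComplex (ModuleCat R) ℕ) (n : ℕ) :
    Function.Surjective (K.homologyπ n).hom :=
  (ModuleCat.epi_iff_surjective _).1 inferInstance

variable (R) in
/-- The inclusion of the cycles of the complex `Hom(K, Y)` into `Hom(Kₙ, Y)`. -/
noncomputable def cyclesHom (K : ChainComplex C ℕ) (Y : C) (n : ℕ) :
    (K.linearYonedaObj R Y).cycles n →ₗ[R] (K.X n ⟶ Y) :=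
  ((K.linearYonedaObj R Y).iCycles n).hom

lemma d_comp_cyclesHom (K : ChainComplex C ℕ) (Y : C) (n : ℕ)
    (z : (K.linearYonedaObj R Y).cycles n) :
    K.d (n + 1) n ≫ cyclesHom R K Y n z = 0 :=
  ConcreteCategory.congr_hom ((K.linearYonedaObj R Y).iCycles_d n (n + 1)) z

lemma exists_cyclesHom_eq {K : ChainComplex C ℕ} {n : ℕ} {f : K.X n ⟶ Y}
    (hf : K.d (n + 1) n ≫ f = 0) : ∃ z, cyclesHom R K Y n z = f :=
  ⟨(K.linearYonedaObj R Y).cyclesMk f (n + 1) (by simp) hf,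
    (K.linearYonedaObj R Y).i_cyclesMk f (n + 1) (by simp) hf⟩

variable (R) in
/-- The map `Hom(L, Y) ⟶ Hom(K, Y)` induced by a chain map `K ⟶ L`. -/
noncomputable def linearYonedaObjMap {K L : ChainComplex C ℕ} (φ : K ⟶ L) (Y : C) :
    L.linearYonedaObj R Y ⟶ K.linearYonedaObj R Y :=
  (unopFunctor _ _).map
    ((((linearYoneda R C).obj Y).rightOp.mapHomologicalComplex _).map φ).op

lemma cyclesHom_naturality {K L : ChainComplex C ℕ} (φ : L ⟶ K) (Y : C) (n : ℕ)
    (z : (K.linearYonedaObj R Y).cycles n) :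
    cyclesHom R L Y n (cyclesMap (linearYonedaObjMap R φ Y) n z) =
      φ.f n ≫ cyclesHom R K Y n z :=
  ConcreteCategory.congr_hom (cyclesMap_i (linearYonedaObjMap R φ Y) n) z

lemma isoExt_hom_naturality [EnoughProjectives C]
    {P : ProjectiveResolution X} {P' : ProjectiveResolution X'}
    {f : X' ⟶ X} (φ : ProjectiveResolution.Hom P' P f) (Y : C) (n : ℕ) :
    (P.isoExt n Y).hom ≫ homologyMap (linearYonedaObjMap R φ.hom Y) n =
      ((Ext R C n).map f.op).app Y ≫ (P'.isoExt n Y).hom :=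
  let derivedSq : CommSq (P.isoLeftDerivedObj ((linearYoneda R C).obj Y).rightOp n).unop.inv
      (((Ext R C n).map f.op).app Y)
      (homologyMap ((((linearYoneda R C).obj Y).rightOp.mapHomologicalComplex _).map φ.hom) n).unop
      (P'.isoLeftDerivedObj ((linearYoneda R C).obj Y).rightOp n).unop.inv :=
    ⟨congrArg Quiver.Hom.unop (ProjectiveResolution.isoLeftDerivedObj_inv_naturality f P' P
      φ.hom (by simpa using φ.hom_f_zero_comp_π_f_zero) ((linearYoneda R C).obj Y).rightOp n).symm⟩
  let unopSq : CommSq (homologyUnop _ n).hom (homologyMap (linearYonedaObjMap R φ.hom Y) n)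
      (homologyMap ((((linearYoneda R C).obj Y).rightOp.mapHomologicalComplex _).map φ.hom) n).unop
      (homologyUnop _ n).hom :=
    ⟨congrArg Quiver.Hom.unop (homologyOp_hom_naturality (linearYonedaObjMap R φ.hom Y) n)⟩
  (derivedSq.horiz_comp unopSq.horiz_inv).w

variable [HasExt C]

lemma smul_extMk (P : ProjectiveResolution X) {n : ℕ} (r : R) (f : P.complex.X n ⟶ Y) (m : ℕ)
    (hm : n + 1 = m) (hf : P.complex.d m n ≫ f = 0) :
    r • P.extMk f m hm hf = P.extMk (r • f) m hm (by simp [hf]) := by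
  rw [Abelian.Ext.smul_eq_comp_mk₀, ProjectiveResolution.extMk_comp_mk₀]
  simp

lemma extMk_zero_eq_zero_iff (P : ProjectiveResolution X) (f : P.complex.X 0 ⟶ Y) (m : ℕ)
    (hm : 0 + 1 = m) (hf : P.complex.d m 0 ≫ f = 0) :
    P.extMk f m hm hf = 0 ↔ f = 0 := by
  refine ⟨fun h ↦ ?_, fun h ↦ by subst h; exact P.extMk_zero m hm⟩
  rw [← P.extEquivCohomologyClass.apply_eq_iff_eq,
    ProjectiveResolution.extEquivCohomologyClass_extMk,
    ProjectiveResolution.extEquivCohomologyClass_zero,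
    CochainComplex.HomComplex.CohomologyClass.mk_eq_zero_iff,
    CochainComplex.HomComplex.Cocycle.toSingleMk_mem_coboundaries_iff _ _ _ _ _ 1 (by simp)] at h
  obtain ⟨g, hg⟩ := h
  have hX : IsZero (P.cochainComplex.X 1) := P.cochainComplex.isZero_of_isStrictlyLE 0 1
  rw [← cancel_epi (P.cochainComplexXIso (-(0 : ℕ)) 0 rfl).hom, comp_zero]
  exact hg.symm.trans (by rw [hX.eq_of_src g 0, comp_zero])

variable (R) in
/-- The map sending a cycle of the complex `Hom(P, Y)` to its class in `Ext`, where `P` is a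
projective resolution. -/
noncomputable def cyclesToExt (P : ProjectiveResolution X) (Y : C) (n : ℕ) :
    (P.complex.linearYonedaObj R Y).cycles n →ₗ[R] Abelian.Ext X Y n where
  toFun z := P.extMk (cyclesHom R P.complex Y n z) (n + 1) rfl (d_comp_cyclesHom P.complex Y n z)
  map_add' z w := by simp only [P.add_extMk, map_add]
  map_smul' r z := by simp only [smul_extMk, map_smul, RingHom.id_apply]

lemma cyclesToExt_surjective (P : ProjectiveResolution X) (Y : C) (n : ℕ) :
    Function.Surjective (cyclesToExt R P Y n) := fun α ↦ by
  obtain ⟨f, hf, rfl⟩ := P.extMk_surjective α (n + 1) rfl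
  obtain ⟨z, rfl⟩ := exists_cyclesHom_eq (R := R) hf
  exact ⟨z, rfl⟩

lemma cyclesToExt_eq_zero_iff (P : ProjectiveResolution X) (Y : C) (n : ℕ)
    (z : (P.complex.linearYonedaObj R Y).cycles n) :
    cyclesToExt R P Y n z = 0 ↔
      ∃ f, (P.complex.linearYonedaObj R Y).d ((ComplexShape.up ℕ).prev n) n f =
        cyclesHom R P.complex Y n z := by
  cases n with
  | zero =>
    rw [(P.complex.linearYonedaObj R Y).shape _ _ (by simp)]
    exact (extMk_zero_eq_zero_iff P _ 1 rfl (d_comp_cyclesHom P.complex Y 0 z)).trans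
      ⟨fun h ↦ ⟨0, h.symm⟩, fun ⟨_, hf⟩ ↦ hf.symm⟩
  | succ n =>
    rw [show (ComplexShape.up ℕ).prev (n + 1) = n by simp]
    exact P.extMk_eq_zero_iff _ (n + 2) rfl (d_comp_cyclesHom P.complex Y (n + 1) z) n rfl

lemma exact_toCycles_cyclesToExt (P : ProjectiveResolution X) (Y : C) (n : ℕ) :
    Function.Exact
      ((P.complex.linearYonedaObj R Y).toCycles ((ComplexShape.up ℕ).prev n) n).hom
      (cyclesToExt R P Y n) := fun z ↦ by
  have hi : Function.Injective (cyclesHom R P.complex Y n) :=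
    (ModuleCat.mono_iff_injective ((P.complex.linearYonedaObj R Y).iCycles n)).1 inferInstance
  rw [cyclesToExt_eq_zero_iff]
  refine exists_congr fun f ↦ ?_
  rw [← toCycles_i]
  exact hi.eq_iff

variable (R) in
/-- The cohomology of `Hom(P, Y)` is `Ext`. -/
noncomputable def homologyEquivExt (P : ProjectiveResolution X) (Y : C) (n : ℕ) :
    (P.complex.linearYonedaObj R Y).homology n ≃ₗ[R] Abelian.Ext X Y n :=
  ((exact_toCycles_homologyπ _ n).linearEquivOfSurjective (homologyπ_surjective _ n)).symm ≪≫ₗ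
    (exact_toCycles_cyclesToExt P Y n).linearEquivOfSurjective (cyclesToExt_surjective P Y n)

lemma homologyEquivExt_homologyπ (P : ProjectiveResolution X) (Y : C) (n : ℕ)
    (z : (P.complex.linearYonedaObj R Y).cycles n) :
    homologyEquivExt R P Y n ((P.complex.linearYonedaObj R Y).homologyπ n z) =
      cyclesToExt R P Y n z :=
  congrArg ((exact_toCycles_cyclesToExt P Y n).linearEquivOfSurjective
    (cyclesToExt_surjective P Y n))
      (Function.Exact.linearEquivOfSurjective_symm_apply (exact_toCycles_homologyπ _ n)
        (homologyπ_surjective _ n) z)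

lemma cyclesToExt_naturality {P : ProjectiveResolution X} {P' : ProjectiveResolution X'}
    {f : X' ⟶ X} (φ : ProjectiveResolution.Hom P' P f) (Y : C) (n : ℕ)
    (z : (P.complex.linearYonedaObj R Y).cycles n) :
    cyclesToExt R P' Y n (cyclesMap (linearYonedaObjMap R φ.hom Y) n z) =
      (Abelian.Ext.mk₀ f).comp (cyclesToExt R P Y n z) (zero_add n) := by
  refine Eq.trans ?_ (ProjectiveResolution.mk₀_comp_extMk (cyclesHom R P.complex Y n z) (n + 1) rfl
    (d_comp_cyclesHom P.complex Y n z) φ).symm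
  simp only [cyclesToExt, LinearMap.coe_mk, AddHom.coe_mk, cyclesHom_naturality]

lemma homologyEquivExt_naturality {P : ProjectiveResolution X} {P' : ProjectiveResolution X'}
    {f : X' ⟶ X} (φ : ProjectiveResolution.Hom P' P f) (Y : C) (n : ℕ)
    (x : (P.complex.linearYonedaObj R Y).homology n) :
    homologyEquivExt R P' Y n (homologyMap (linearYonedaObjMap R φ.hom Y) n x) =
      (Abelian.Ext.mk₀ f).comp (homologyEquivExt R P Y n x) (zero_add n) := by
  obtain ⟨z, rfl⟩ := homologyπ_surjective _ n x
  calc homologyEquivExt R P' Y n (homologyMap (linearYonedaObjMap R φ.hom Y) n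
        ((P.complex.linearYonedaObj R Y).homologyπ n z))
    _ = homologyEquivExt R P' Y n ((P'.complex.linearYonedaObj R Y).homologyπ n
          (cyclesMap (linearYonedaObjMap R φ.hom Y) n z)) :=
      congrArg _ (ConcreteCategory.congr_hom
        (homologyπ_naturality (linearYonedaObjMap R φ.hom Y) n) z)
    _ = (Abelian.Ext.mk₀ f).comp (cyclesToExt R P Y n z) (zero_add n) := by
      rw [homologyEquivExt_homologyπ, cyclesToExt_naturality]
    _ = (Abelian.Ext.mk₀ f).comp (homologyEquivExt R P Y n
          ((P.complex.linearYonedaObj R Y).homologyπ n z)) (zero_add n) := by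
      rw [homologyEquivExt_homologyπ]

end Comparison

section ExtFunctor

open HomologicalComplex

universe v

variable {R : Type*} [CommRing R] {C : Type*} [Category.{v} C] [Abelian C] [Linear R C]
  [HasExt.{v} C]

variable (R) in
/-- The contravariant functor `X ↦ Ext^n(X, Y)` with values in `R`-modules. -/
@[simps]
noncomputable def extModuleFunctor (n : ℕ) (Y : C) : Cᵒᵖ ⥤ ModuleCat.{v} R where
  obj X := ModuleCat.of R (Abelian.Ext X.unop Y n)
  map f := ModuleCat.ofHom ((Abelian.Ext.mk₀ f.unop).precompOfLinear R Y (zero_add n))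
  map_id X := ModuleCat.hom_ext (LinearMap.ext fun x ↦ Abelian.Ext.mk₀_id_comp x)
  map_comp f g := ModuleCat.hom_ext (LinearMap.ext fun x ↦ by simp)

variable (R) in
/-- The derived functor `Ext` agrees with the `Ext` of abelian categories. -/
noncomputable def extIsoExtModuleFunctor [EnoughProjectives C] (n : ℕ) (Y : C) :
    (Ext R C n).flip.obj Y ≅ extModuleFunctor R n Y :=
  NatIso.ofComponents
    (fun X ↦ (projectiveResolution X.unop).isoExt n Y ≪≫
      (homologyEquivExt R (projectiveResolution X.unop) Y n).toModuleIso)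
    (fun {X X'} f ↦ by
      let φ : ProjectiveResolution.Hom (projectiveResolution X'.unop)
          (projectiveResolution X.unop) f.unop :=
        ⟨ProjectiveResolution.lift f.unop _ _,
          by simpa using ProjectiveResolution.lift_commutes_zero f.unop _ _⟩
      let isoExtSq : CommSq _ _ _ _ := ⟨isoExt_hom_naturality (R := R) φ Y n⟩
      let homologySq : CommSq
          (homologyEquivExt R (projectiveResolution X.unop) Y n).toModuleIso.hom
          (homologyMap (linearYonedaObjMap R φ.hom Y) n) ((extModuleFunctor R n Y).map f)
          (homologyEquivExt R (projectiveResolution X'.unop) Y n).toModuleIso.hom :=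
        ⟨ModuleCat.hom_ext (LinearMap.ext fun x ↦ (homologyEquivExt_naturality φ Y n x).symm)⟩
      exact (isoExtSq.horiz_comp homologySq).w.symm)

end ExtFunctor

section FilteredColimit

open Limits

variable {R : Type u} [CommRing R] {J : Type} [SmallCategory J] {F G H : J ⥤ ModuleCat.{u} R}

lemma colimMap_ι_apply (α : F ⟶ G) (j : J) (x : F.obj j) :
    colimMap α (colimit.ι F j x) = colimit.ι G j (α.app j x) :=
  ConcreteCategory.congr_hom (ι_colimMap α j) x

variable [IsFiltered J]

instance : PreservesColimitsOfShape J (forget (ModuleCat.{u} R)) :=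
  have := preservesSmallestFilteredColimits_of_preservesFilteredColimits (forget (ModuleCat.{u} R))
  PreservesFilteredColimitsOfSize.preserves_filtered_colimits J

lemma exact_colimMap (α : F ⟶ G) (β : G ⟶ H) (h : ∀ j, Function.Exact (α.app j) (β.app j)) :
    Function.Exact (colimMap α) (colimMap β) := by
  intro x
  obtain ⟨j, y, rfl⟩ := Concrete.colimit_exists_rep G x
  refine ⟨fun hy ↦ ?_, ?_⟩
  · rw [colimMap_ι_apply] at hy
    obtain ⟨k, f, hk⟩ := Concrete.colimit_rep_eq_zero (hx := hy)
    rw [← NatTrans.naturality_apply] at hk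
    obtain ⟨z, hz⟩ := (h k _).1 hk
    exact ⟨colimit.ι F k z, by rw [colimMap_ι_apply, hz, colimit.w_apply]⟩
  · rintro ⟨z, hz⟩
    obtain ⟨k, z, rfl⟩ := Concrete.colimit_exists_rep F z
    rw [← hz, colimMap_ι_apply, colimMap_ι_apply, (h k).apply_apply_eq_zero, map_zero]

end FilteredColimit

section LongExactSequence

open Abelian

variable {R : Type*} [CommRing R] {C : Type*} [Category* C] [Abelian C] [Linear R C] [HasExt C]
  {S : ShortComplex C}

variable (R) in
lemma exact_postcomp_f_g (hS : S.ShortExact) (X : C) (i : ℕ) :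
    Function.Exact ((Ext.mk₀ S.f).postcompOfLinear R X (add_zero i))
      ((Ext.mk₀ S.g).postcompOfLinear R X (add_zero i)) := fun x ↦
  ⟨fun h ↦ Ext.covariant_sequence_exact₂ X hS x h, by rintro ⟨y, rfl⟩; simp⟩

variable (R) in
lemma exact_postcomp_g_extClass (hS : S.ShortExact) (X : C) (i : ℕ) :
    Function.Exact ((Ext.mk₀ S.g).postcompOfLinear R X (add_zero i))
      (hS.extClass.postcompOfLinear R X (rfl : i + 1 = i + 1)) := fun x ↦
  ⟨fun h ↦ Ext.covariant_sequence_exact₃ X hS x rfl h, by rintro ⟨y, rfl⟩; simp⟩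

variable (R) in
lemma exact_postcomp_extClass_f (hS : S.ShortExact) (X : C) (i : ℕ) :
    Function.Exact (hS.extClass.postcompOfLinear R X (rfl : i + 1 = i + 1))
      ((Ext.mk₀ S.f).postcompOfLinear R X (add_zero (i + 1))) := fun x ↦
  ⟨fun h ↦ Ext.covariant_sequence_exact₁ X hS x h rfl, by rintro ⟨y, rfl⟩; simp⟩

/-- The action of a class `α ∈ Ext^a(M, N)` on `Ext` by postcomposition, natural in the first
variable. -/
@[simps]
noncomputable def extModuleFunctorMap {M N : C} {i j a : ℕ} (α : Ext M N a) (h : i + a = j) :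
    extModuleFunctor R i M ⟶ extModuleFunctor R j N where
  app X := ModuleCat.ofHom (α.postcompOfLinear R X.unop h)
  naturality X Y f := by
    ext x
    exact Ext.comp_assoc _ _ _ (zero_add i) h (by lia)

end LongExactSequence

section LocalCohomology

open Limits Abelian Opposite

variable {R : Type u} [CommRing R] (𝔞 : Ideal R)

/-- The direct system of the modules `Ext^i(R/𝔞^n, M)`, indexed as in `localCohomology`. -/
noncomputable abbrev extPowers (i : ℕ) (M : ModuleCat.{u} R) : ℕᵒᵖᵒᵖ ⥤ ModuleCat.{u} R :=
  (localCohomology.ringModIdeals (localCohomology.idealPowersDiagram 𝔞)).op ⋙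
    extModuleFunctor R i M

/-- The colimit of the modules `Ext^i(R/𝔞^n, M)`: local cohomology, computed with the `Ext` of
abelian categories, for which long exact sequences are available. -/
noncomputable abbrev ExtLimit (i : ℕ) (M : ModuleCat.{u} R) : ModuleCat.{u} R :=
  colimit (extPowers 𝔞 i M)

/-- Evaluating the functor `localCohomology` gives the colimit `ExtLimit`. -/
noncomputable def localCohomologyIsoExtLimit (i : ℕ) (M : ModuleCat.{u} R) :
    (localCohomology 𝔞 i).obj M ≅ ExtLimit 𝔞 i M :=
  have := localCohomology.hasColimitDiagram (localCohomology.idealPowersDiagram 𝔞) i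
  colimitObjIsoColimitCompEvaluation
      (localCohomology.diagram (localCohomology.idealPowersDiagram 𝔞) i) M ≪≫
    HasColimit.isoOfNatIso (Functor.isoWhiskerLeft
      (localCohomology.ringModIdeals (localCohomology.idealPowersDiagram 𝔞)).op
      (extIsoExtModuleFunctor R i M))

lemma smul_ext_eq_zero_of_mem {J : Ideal R} {M : ModuleCat.{u} R} {i : ℕ}
    (x : Ext (ModuleCat.of R (R ⧸ J)) M i) {r : R} (hr : r ∈ J) : r • x = 0 := by
  have smul_id : r • 𝟙 (ModuleCat.of R (R ⧸ J)) = 0 := by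
    ext
    exact (Algebra.smul_def r 1).trans
      ((mul_one _).trans (Ideal.Quotient.eq_zero_iff_mem.2 hr))
  rw [← Ext.mk₀_id_comp x, ← Ext.smul_comp, ← Ext.mk₀_smul, smul_id, Ext.mk₀_zero, Ext.zero_comp]

namespace ExtLimit

variable {M N P : ModuleCat.{u} R} {i j k a b : ℕ}

/-- The map on local cohomology given by postcomposition with an `Ext` class. -/
noncomputable def postcomp (α : Ext M N a) (h : i + a = j) : ExtLimit 𝔞 i M ⟶ ExtLimit 𝔞 j N :=
  colimMap (Functor.whiskerLeft _ (extModuleFunctorMap α h))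

lemma exact_postcomp (α : Ext M N a) (h : i + a = j) (β : Ext N P b) (h' : j + b = k)
    (exact : ∀ X : ModuleCat.{u} R, Function.Exact (α.postcompOfLinear R X h)
      (β.postcompOfLinear R X h')) :
    Function.Exact (postcomp 𝔞 α h) (postcomp 𝔞 β h') :=
  exact_colimMap _ _ fun _ ↦ exact _

instance subsingleton_of_injective (I : ModuleCat.{u} R) [Injective I] (i : ℕ) :
    Subsingleton (ExtLimit 𝔞 (i + 1) I) := by
  refine subsingleton_of_forall_eq 0 fun x ↦ ?_
  obtain ⟨n, y, rfl⟩ := Concrete.colimit_exists_rep _ x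
  exact (congrArg _ (Ext.eq_zero_of_injective y)).trans (map_zero _)

lemma isTorsionIdeal (i : ℕ) (M : ModuleCat.{u} R) : IsTorsionIdeal 𝔞 (ExtLimit 𝔞 i M) := by
  intro x
  obtain ⟨n, y, rfl⟩ := Concrete.colimit_exists_rep _ x
  exact ⟨n.unop.unop, fun a ha ↦ (map_smul (colimit.ι (extPowers 𝔞 i M) n).hom a y).symm.trans
    ((congrArg _ (smul_ext_eq_zero_of_mem y ha)).trans (map_zero _))⟩

end ExtLimit

end LocalCohomology

section TorsionModules

variable {R : Type u} [CommRing R] {𝔞 : Ideal R} {M N : Type u} [AddCommGroup M] [Module R M]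
  [AddCommGroup N] [Module R N]

lemma mem_primaryComponent_iff {m : M} :
    m ∈ 𝔞.primaryComponent M ↔ ∃ n : ℕ, ∀ a ∈ 𝔞 ^ n, a • m = 0 := by
  simp only [Ideal.primaryComponent_mem, Submodule.mem_torsionBySet_iff, SetLike.coe_sort_coe,
    Subtype.forall]

lemma isTorsionIdeal_primaryComponent : IsTorsionIdeal 𝔞 (𝔞.primaryComponent M) := fun m ↦
  let ⟨n, hn⟩ := mem_primaryComponent_iff.1 m.2
  ⟨n, fun a ha ↦ Subtype.ext (hn a ha)⟩

namespace IsTorsionIdeal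

lemma of_surjective (hM : IsTorsionIdeal 𝔞 M) (f : M →ₗ[R] N) (hf : Function.Surjective f) :
    IsTorsionIdeal 𝔞 N := by
  intro y
  obtain ⟨x, rfl⟩ := hf y
  obtain ⟨n, hn⟩ := hM x
  exact ⟨n, fun a ha ↦ by rw [← map_smul, hn a ha, map_zero]⟩

lemma of_injective (hN : IsTorsionIdeal 𝔞 N) (f : M →ₗ[R] N) (hf : Function.Injective f) :
    IsTorsionIdeal 𝔞 M := by
  intro x
  obtain ⟨n, hn⟩ := hN (f x)
  exact ⟨n, fun a ha ↦ hf (by rw [map_smul, hn a ha, map_zero])⟩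

lemma exists_pow_le_annihilator [Module.Finite R M] (hM : IsTorsionIdeal 𝔞 M) :
    ∃ n : ℕ, 𝔞 ^ n ≤ Module.annihilator R M := by
  obtain ⟨s, hs⟩ : (⊤ : Submodule R M).FG := Module.Finite.fg_top
  choose n hn using hM
  refine ⟨s.sup n, fun a ha ↦ ?_⟩
  rw [← Submodule.annihilator_top, ← hs, Submodule.mem_annihilator_span]
  exact fun m ↦ hn m a (Ideal.pow_le_pow_right (Finset.le_sup m.2) ha)

end IsTorsionIdeal

lemma primaryComponent_quotient_eq_bot [IsNoetherianRing R] :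
    𝔞.primaryComponent (M ⧸ 𝔞.primaryComponent M) = ⊥ := by
  refine eq_bot_iff.2 fun x hx ↦ ?_
  obtain ⟨m, rfl⟩ := Submodule.mkQ_surjective _ x
  obtain ⟨n, hn⟩ := mem_primaryComponent_iff.1 hx
  let N : Submodule R M := Submodule.map (LinearMap.toSpanSingleton R M m) (𝔞 ^ n)
  have hN : N ≤ 𝔞.primaryComponent M := by
    rintro _ ⟨a, ha, rfl⟩
    exact (Submodule.Quotient.mk_eq_zero _).1 (hn a ha)
  obtain ⟨k, hk⟩ := (isTorsionIdeal_primaryComponent.of_injective (Submodule.inclusion hN)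
    (Submodule.inclusion_injective hN)).exists_pow_le_annihilator
  refine (Submodule.Quotient.mk_eq_zero _).2 (mem_primaryComponent_iff.2 ⟨k + n, fun c hc ↦ ?_⟩)
  rw [pow_add] at hc
  refine Submodule.mul_induction_on hc (fun b hb a ha ↦ ?_) fun b c hb hc ↦ ?_
  · rw [mul_smul]
    exact congrArg Subtype.val (Module.mem_annihilator.1 (hk hb) ⟨a • m, a, ha, rfl⟩)
  · rw [add_smul, hb, hc, add_zero]

end TorsionModules

section InjectiveTorsion

variable {R : Type u} [CommRing R] {I : Type u} [AddCommGroup I] [Module R I]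

lemma exists_pow_inf_le_pow_mul [IsNoetherianRing R] (𝔞 J : Ideal R) (n : ℕ) :
    ∃ k : ℕ, 𝔞 ^ k ⊓ J ≤ 𝔞 ^ n * J := by
  obtain ⟨c, hc⟩ := Ideal.exists_pow_inf_eq_pow_smul 𝔞 J
  refine ⟨n + c, ?_⟩
  have hck : 𝔞 ^ (n + c) ⊓ J = 𝔞 ^ n * (𝔞 ^ c ⊓ J) := by
    simpa using hc (n + c) (Nat.le_add_left c n)
  exact hck.trans_le (Ideal.mul_mono_right inf_le_right)

lemma exists_torsionBySet_smul_eq [Module.Injective R I] {J K : Ideal R} (g : J →ₗ[R] I)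
    (hg : ∀ x : J, (x : R) ∈ K → g x = 0) :
    ∃ y ∈ Submodule.torsionBySet R I K, ∀ x : J, (x : R) • y = g x := by
  let ι : (J ⧸ Submodule.comap J.subtype K) →ₗ[R] R ⧸ K := Submodule.mapQ _ _ J.subtype le_rfl
  have hι : Function.Injective ι := by
    rw [← LinearMap.ker_eq_bot, Submodule.ker_mapQ]
    exact Submodule.mkQ_map_self _
  obtain ⟨ψ, hψ⟩ := Module.Injective.out ι hι (Submodule.liftQ (Submodule.comap J.subtype K) g hg)
  have smul_ψ (r : R) : r • ψ (Submodule.Quotient.mk 1) = ψ (Submodule.Quotient.mk r) := by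
    rw [← map_smul, ← Submodule.Quotient.mk_smul, smul_eq_mul, mul_one]
  refine ⟨ψ (Submodule.Quotient.mk 1), (Submodule.mem_torsionBySet_iff _ _).2 fun a ↦ ?_,
    fun x ↦ (smul_ψ x).trans (hψ (Submodule.Quotient.mk x))⟩
  rw [smul_ψ, (Submodule.Quotient.mk_eq_zero K).2 a.2, map_zero]

theorem injective_primaryComponent [IsNoetherianRing R] (𝔞 : Ideal R) [Module.Injective R I] :
    Module.Injective R (𝔞.primaryComponent I) := by
  refine Module.Baer.injective fun J g ↦ ?_
  obtain ⟨n, hn⟩ := (isTorsionIdeal_primaryComponent.of_injective (LinearMap.range g).subtype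
    Subtype.val_injective).exists_pow_le_annihilator
  obtain ⟨k, hk⟩ := exists_pow_inf_le_pow_mul 𝔞 J n
  have vanishing (x : J) (hx : (x : R) ∈ 𝔞 ^ k) : g x = 0 := by
    suffices 𝔞 ^ n * J ≤ (LinearMap.ker g).map J.subtype by
      obtain ⟨y, hy, hyx⟩ := this (hk ⟨hx, x.2⟩)
      rwa [← Subtype.ext (a1 := y) hyx]
    refine Ideal.mul_le.2 fun a ha y hy ↦ ⟨a • ⟨y, hy⟩, ?_, rfl⟩
    rw [SetLike.mem_coe, LinearMap.mem_ker, map_smul]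
    exact congrArg Subtype.val (Module.mem_annihilator.1 (hn ha) ⟨g ⟨y, hy⟩, _, rfl⟩)
  obtain ⟨y, hy, hyg⟩ := exists_torsionBySet_smul_eq (K := 𝔞 ^ k)
    ((𝔞.primaryComponent I).subtype ∘ₗ g) fun x hx ↦ congrArg Subtype.val (vanishing x hx)
  exact ⟨LinearMap.toSpanSingleton R _ ⟨y, (𝔞.primaryComponent_mem I y).2 ⟨k, hy⟩⟩,
    fun x hx ↦ Subtype.ext (hyg ⟨x, hx⟩)⟩

end InjectiveTorsion

section ExtZero

open Abelian

variable {R : Type u} [CommRing R] (J : Ideal R) {M N : ModuleCat.{u} R}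

variable (M) in
/-- Evaluation at `1` on `Ext^0(R/J, M) = Hom(R/J, M)`. -/
noncomputable def extEvalOne : Ext (ModuleCat.of R (R ⧸ J)) M 0 →ₗ[R] M :=
  LinearMap.applyₗ (1 : R ⧸ J) ∘ₗ
    (Ext.linearEquiv₀.trans ModuleCat.homLinearEquiv).toLinearMap

lemma extEvalOne_mk₀ (f : ModuleCat.of R (R ⧸ J) ⟶ M) :
    extEvalOne J M (Ext.mk₀ f) = f (1 : R ⧸ J) :=
  congrArg (fun g : ModuleCat.of R (R ⧸ J) ⟶ M ↦ g (1 : R ⧸ J))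
    (Ext.homEquiv₀.apply_symm_apply f)

lemma extEvalOne_injective : Function.Injective (extEvalOne J M) := by
  refine (injective_iff_map_eq_zero _).2 fun x hx ↦ ?_
  obtain ⟨f, rfl⟩ := (Ext.mk₀_bijective _ _).2 x
  rw [extEvalOne_mk₀] at hx
  suffices f = 0 by rw [this, Ext.mk₀_zero]
  ext
  exact hx

lemma exists_extEvalOne_eq {m : M} (hm : ∀ a ∈ J, a • m = 0) : ∃ x, extEvalOne J M x = m := by
  refine ⟨Ext.mk₀ (ModuleCat.ofHom
    (Submodule.liftQ J (LinearMap.toSpanSingleton R M m) hm)), ?_⟩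
  rw [extEvalOne_mk₀]
  exact one_smul R m

variable {J} in
lemma smul_extEvalOne_eq_zero {r : R} (hr : r ∈ J) (x : Ext (ModuleCat.of R (R ⧸ J)) M 0) :
    r • extEvalOne J M x = 0 := by
  rw [← map_smul, smul_ext_eq_zero_of_mem x hr, map_zero]

lemma extEvalOne_comp_mk₀ (f : M ⟶ N) (x : Ext (ModuleCat.of R (R ⧸ J)) M 0) :
    extEvalOne J N (x.comp (Ext.mk₀ f) (add_zero 0)) = f (extEvalOne J M x) := by
  obtain ⟨g, rfl⟩ := (Ext.mk₀_bijective _ _).2 x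
  rw [Ext.mk₀_comp_mk₀, extEvalOne_mk₀, extEvalOne_mk₀]
  rfl

variable {J} in
lemma extEvalOne_mk₀_comp {K : Ideal R} {f : ModuleCat.of R (R ⧸ K) ⟶ ModuleCat.of R (R ⧸ J)}
    (hf : f (1 : R ⧸ K) = (1 : R ⧸ J)) (x : Ext (ModuleCat.of R (R ⧸ J)) M 0) :
    extEvalOne K M ((Ext.mk₀ f).comp x (zero_add 0)) = extEvalOne J M x := by
  obtain ⟨g, rfl⟩ := (Ext.mk₀_bijective _ _).2 x
  rw [Ext.mk₀_comp_mk₀, extEvalOne_mk₀, extEvalOne_mk₀]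
  exact congrArg g hf

end ExtZero

section LocalCohomologyOfTorsion

open Limits Abelian Opposite

variable {R : Type u} [CommRing R] (𝔞 : Ideal R) {M N : ModuleCat.{u} R}

namespace ExtLimit

variable (M) in
/-- The canonical map from `H^0_𝔞(M)` to `M`. -/
noncomputable def eval : ExtLimit 𝔞 0 M ⟶ M :=
  colimit.desc (extPowers 𝔞 0 M)
    { pt := M
      ι :=
        { app n := ModuleCat.ofHom (extEvalOne (𝔞 ^ n.unop.unop) M)
          naturality _ _ _ := by
            ext x
            exact extEvalOne_mk₀_comp rfl x } }

lemma eval_ι (n : ℕᵒᵖᵒᵖ) (x : (extPowers 𝔞 0 M).obj n) :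
    eval 𝔞 M (colimit.ι (extPowers 𝔞 0 M) n x) = extEvalOne (𝔞 ^ n.unop.unop) M x :=
  ConcreteCategory.congr_hom (colimit.ι_desc _ n) x

variable (M) in
lemma eval_injective : Function.Injective (eval 𝔞 M) := by
  refine (injective_iff_map_eq_zero _).2 fun x hx ↦ ?_
  obtain ⟨n, y, rfl⟩ := Concrete.colimit_exists_rep _ x
  rw [eval_ι] at hx
  have hy : y = 0 := extEvalOne_injective _ (hx.trans (map_zero _).symm)
  rw [hy, map_zero]

lemma range_eval : LinearMap.range (eval 𝔞 M).hom = 𝔞.primaryComponent M := by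
  ext m
  rw [mem_primaryComponent_iff]
  constructor
  · rintro ⟨x, rfl⟩
    obtain ⟨n, hn⟩ := isTorsionIdeal 𝔞 0 M x
    exact ⟨n, fun a ha ↦ by rw [← map_smul, hn a ha, map_zero]⟩
  · rintro ⟨n, hn⟩
    obtain ⟨x, rfl⟩ := exists_extEvalOne_eq (𝔞 ^ n) hn
    exact ⟨colimit.ι (extPowers 𝔞 0 M) (op (op n)) x, eval_ι 𝔞 (op (op n)) x⟩

lemma eval_postcomp (f : M ⟶ N) (x : ExtLimit 𝔞 0 M) :
    eval 𝔞 N (postcomp 𝔞 (Ext.mk₀ f) (add_zero 0) x) = f (eval 𝔞 M x) := by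
  obtain ⟨n, y, rfl⟩ := Concrete.colimit_exists_rep _ x
  refine (congrArg _ (colimMap_ι_apply _ n y)).trans ?_
  rw [eval_ι, eval_ι]
  exact extEvalOne_comp_mk₀ _ f y

variable {𝔞} in
lemma postcomp_surjective (hM : IsTorsionIdeal 𝔞 M) (f : M ⟶ N) [Epi f] :
    Function.Surjective (postcomp 𝔞 (Ext.mk₀ f) (add_zero 0)) := by
  intro y
  obtain ⟨m, hm⟩ := (ModuleCat.epi_iff_surjective f).1 inferInstance (eval 𝔞 N y)
  obtain ⟨x, rfl⟩ : m ∈ LinearMap.range (eval 𝔞 M).hom :=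
    range_eval 𝔞 ▸ mem_primaryComponent_iff.2 (hM m)
  exact ⟨x, eval_injective 𝔞 N ((eval_postcomp 𝔞 f x).trans hm)⟩

variable {𝔞} in
lemma subsingleton_zero_of_primaryComponent_eq_bot (hM : 𝔞.primaryComponent M = ⊥) :
    Subsingleton (ExtLimit 𝔞 0 M) :=
  subsingleton_of_forall_eq 0 fun x ↦ eval_injective 𝔞 M <| by
    rw [map_zero, ← Submodule.mem_bot R, ← hM, ← range_eval]
    exact ⟨x, rfl⟩

section LongExactSequence

variable {S : ShortComplex (ModuleCat.{u} R)} (hS : S.ShortExact) (i : ℕ)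

include hS in
lemma exact_f_g : Function.Exact (postcomp 𝔞 (Ext.mk₀ S.f) (add_zero i))
    (postcomp 𝔞 (Ext.mk₀ S.g) (add_zero i)) :=
  exact_postcomp 𝔞 _ _ _ _ fun X ↦ exact_postcomp_f_g R hS X i

lemma exact_g_extClass : Function.Exact (postcomp 𝔞 (Ext.mk₀ S.g) (add_zero i))
    (postcomp 𝔞 hS.extClass (rfl : i + 1 = i + 1)) :=
  exact_postcomp 𝔞 _ _ _ _ fun X ↦ exact_postcomp_g_extClass R hS X i

lemma exact_extClass_f : Function.Exact (postcomp 𝔞 hS.extClass (rfl : i + 1 = i + 1))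
    (postcomp 𝔞 (Ext.mk₀ S.f) (add_zero (i + 1))) :=
  exact_postcomp 𝔞 _ _ _ _ fun X ↦ exact_postcomp_extClass_f R hS X i

end LongExactSequence

end ExtLimit

end LocalCohomologyOfTorsion

section Vanishing

open Limits Abelian

variable {R : Type u} [CommRing R] [IsNoetherianRing R] {𝔞 : Ideal R}

variable (𝔞) in
lemma injective_moduleCat_primaryComponent (I : ModuleCat.{u} R) [Injective I] :
    Injective (ModuleCat.of R (𝔞.primaryComponent I)) :=
  have : Module.Injective R I := Module.injective_module_of_injective_object R I
  have := injective_primaryComponent (I := I) 𝔞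
  Module.injective_object_of_injective_module R _

lemma exists_mono_injective_isTorsionIdeal {T : ModuleCat.{u} R} (hT : IsTorsionIdeal 𝔞 T) :
    ∃ (E : ModuleCat.{u} R) (f : T ⟶ E), Mono f ∧ Injective E ∧ IsTorsionIdeal 𝔞 E := by
  let I := Injective.under T
  have hι : Function.Injective (Injective.ι T) := (ModuleCat.mono_iff_injective _).1 inferInstance
  have mem_torsion (x : T) : Injective.ι T x ∈ 𝔞.primaryComponent I :=
    mem_primaryComponent_iff.2 <| (hT x).imp fun n hn a ha ↦ by
      rw [← map_smul, hn a ha, map_zero]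
  exact ⟨ModuleCat.of R (𝔞.primaryComponent I),
    ModuleCat.ofHom ((Injective.ι T).hom.codRestrict _ mem_torsion),
    (ModuleCat.mono_iff_injective _).2 fun x y h ↦ hι (congrArg Subtype.val h),
    injective_moduleCat_primaryComponent 𝔞 I, isTorsionIdeal_primaryComponent⟩

lemma ExtLimit.subsingleton_of_isTorsionIdeal {T : ModuleCat.{u} R} (hT : IsTorsionIdeal 𝔞 T)
    (i : ℕ) : Subsingleton (ExtLimit 𝔞 (i + 1) T) := by
  induction i using Nat.strong_induction_on generalizing T with | _ i ih
  obtain ⟨E, f, _, _, hE⟩ := exists_mono_injective_isTorsionIdeal hT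
  have hS : (ShortComplex.mk f (cokernel.π f) (cokernel.condition f)).ShortExact :=
    { exact := ShortComplex.exact_cokernel f }
  refine subsingleton_of_forall_eq 0 fun x ↦ ?_
  obtain ⟨c, rfl⟩ := (exact_extClass_f 𝔞 hS i x).1 ((subsingleton_of_injective 𝔞 E i).elim _ _)
  cases i with
  | zero =>
    obtain ⟨y, rfl⟩ := postcomp_surjective hE (cokernel.π f) c
    exact (exact_g_extClass 𝔞 hS 0).apply_apply_eq_zero y
  | succ i =>
    have hC : IsTorsionIdeal 𝔞 (cokernel f : ModuleCat.{u} R) :=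
      hE.of_surjective (cokernel.π f).hom ((ModuleCat.epi_iff_surjective _).1 inferInstance)
    rw [(ih i i.lt_succ_self hC).elim c 0, map_zero]

end Vanishing

section DimensionShifting

open Limits Abelian

lemma bijective_of_exact_of_subsingleton {R A B C D : Type*} [Ring R] [AddCommGroup A]
    [AddCommGroup B] [AddCommGroup C] [AddCommGroup D] [Module R A] [Module R B] [Module R C]
    [Module R D] [Subsingleton A] [Subsingleton D] {f : A →ₗ[R] B} {g : B →ₗ[R] C}
    {h : C →ₗ[R] D} (hfg : Function.Exact f g) (hgh : Function.Exact g h) :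
    Function.Bijective g := by
  refine ⟨(injective_iff_map_eq_zero g).2 fun b hb ↦ ?_,
    fun c ↦ (hgh c).1 (Subsingleton.elim _ _)⟩
  obtain ⟨a, rfl⟩ := (hfg b).1 hb
  rw [Subsingleton.elim a 0, map_zero]

variable {R : Type u} [CommRing R] (𝔞 : Ideal R)

/-- The short complex `0 → N → M → M/N → 0`. -/
noncomputable abbrev quotientSequence {M : ModuleCat.{u} R} (N : Submodule R M) :
    ShortComplex (ModuleCat.{u} R) :=
  ModuleCat.shortComplexOfCompEqZero N.subtype N.mkQ (by ext; simp)

lemma shortExact_quotientSequence {M : ModuleCat.{u} R} (N : Submodule R M) :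
    (quotientSequence N).ShortExact :=
  ModuleCat.shortComplex_shortExact _ (LinearMap.exact_subtype_mkQ _)
    Subtype.val_injective (Submodule.mkQ_surjective _)

variable [IsNoetherianRing R]

/-- Killing the torsion submodule does not change local cohomology in positive degrees. -/
noncomputable def ExtLimit.torsionQuotientEquiv (M : ModuleCat.{u} R) (i : ℕ) :
    ExtLimit 𝔞 (i + 1) M ≃ₗ[R]
      ExtLimit 𝔞 (i + 1) (ModuleCat.of R (M ⧸ 𝔞.primaryComponent M)) :=
  let S := quotientSequence (𝔞.primaryComponent M)
  have hS : S.ShortExact := shortExact_quotientSequence _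
  have vanishing (i : ℕ) : Subsingleton (ExtLimit 𝔞 (i + 1) S.X₁) :=
    subsingleton_of_isTorsionIdeal isTorsionIdeal_primaryComponent i
  have := vanishing i
  have := vanishing (i + 1)
  LinearEquiv.ofBijective (postcomp 𝔞 (Ext.mk₀ S.g) (add_zero (i + 1))).hom
    (bijective_of_exact_of_subsingleton (exact_f_g 𝔞 hS (i + 1)) (exact_g_extClass 𝔞 hS (i + 1)))

variable {𝔞}

lemma exists_mono_injective_primaryComponent_eq_bot {M : ModuleCat.{u} R}
    (hM : 𝔞.primaryComponent M = ⊥) :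
    ∃ (E : ModuleCat.{u} R) (f : M ⟶ E), Mono f ∧ Injective E ∧ 𝔞.primaryComponent E = ⊥ := by
  let I := Injective.under M
  let S := quotientSequence (𝔞.primaryComponent I)
  have : Injective S.X₁ := injective_moduleCat_primaryComponent 𝔞 I
  have splitting : S.Splitting := (shortExact_quotientSequence _).splittingOfInjective
  have retract : Retract S.X₃ I := { i := splitting.s, r := S.g, retract := splitting.s_g }
  have hι : Function.Injective (Injective.ι M) := (ModuleCat.mono_iff_injective _).1 inferInstance
  refine ⟨S.X₃, Injective.ι M ≫ S.g, (ModuleCat.mono_iff_injective _).2 ?_, retract.injective,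
    primaryComponent_quotient_eq_bot⟩
  refine (injective_iff_map_eq_zero _).2 fun m hm ↦ ?_
  obtain ⟨n, hn⟩ := mem_primaryComponent_iff.1 ((Submodule.Quotient.mk_eq_zero _).1 hm)
  rw [← Submodule.mem_bot R, ← hM]
  exact mem_primaryComponent_iff.2 ⟨n, fun a ha ↦
    hι ((map_smul (Injective.ι M).hom a m).trans ((hn a ha).trans (map_zero _).symm))⟩

omit [IsNoetherianRing R] in
lemma subsingleton_ext_zero_of_primaryComponent_eq_bot {M : ModuleCat.{u} R}
    (hM : 𝔞.primaryComponent M = ⊥) : Subsingleton (Ext (ModuleCat.of R (R ⧸ 𝔞)) M 0) :=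
  subsingleton_of_forall_eq 0 fun x ↦ extEvalOne_injective 𝔞 <| by
    rw [map_zero, ← Submodule.mem_bot R, ← hM, mem_primaryComponent_iff]
    exact ⟨1, fun a ha ↦ smul_extEvalOne_eq_zero (by rwa [pow_one] at ha) x⟩

theorem exists_dimension_shift {M : ModuleCat.{u} R} (hM : 𝔞.primaryComponent M = ⊥) :
    ∃ C : ModuleCat.{u} R, ∀ i : ℕ,
      Nonempty (Ext (ModuleCat.of R (R ⧸ 𝔞)) C i ≃ₗ[R]
        Ext (ModuleCat.of R (R ⧸ 𝔞)) M (i + 1)) ∧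
      Nonempty (ExtLimit 𝔞 i C ≃ₗ[R] ExtLimit 𝔞 (i + 1) M) := by
  obtain ⟨E, f, _, _, hE⟩ := exists_mono_injective_primaryComponent_eq_bot hM
  have hS : (ShortComplex.mk f (cokernel.π f) (cokernel.condition f)).ShortExact :=
    { exact := ShortComplex.exact_cokernel f }
  have ext_vanishing : ∀ i, Subsingleton (Ext (ModuleCat.of R (R ⧸ 𝔞)) E i)
    | 0 => subsingleton_ext_zero_of_primaryComponent_eq_bot hE
    | _ + 1 => subsingleton_of_forall_eq 0 Ext.eq_zero_of_injective
  have extLimit_vanishing : ∀ i, Subsingleton (ExtLimit 𝔞 i E)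
    | 0 => ExtLimit.subsingleton_zero_of_primaryComponent_eq_bot hE
    | i + 1 => ExtLimit.subsingleton_of_injective 𝔞 E i
  exact ⟨cokernel f, fun i ↦
    ⟨⟨.ofBijective _ (bijective_of_exact_of_subsingleton
      (exact_postcomp_g_extClass R hS _ i) (exact_postcomp_extClass_f R hS _ i))⟩,
    ⟨.ofBijective (ExtLimit.postcomp 𝔞 hS.extClass rfl).hom (bijective_of_exact_of_subsingleton
      (ExtLimit.exact_g_extClass 𝔞 hS i) (ExtLimit.exact_extClass_f 𝔞 hS i))⟩⟩⟩

end DimensionShifting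

section FiniteExt

open Abelian

variable {R : Type u} [CommRing R]

lemma finite_of_exact [IsNoetherianRing R] {A B C : Type*} [AddCommGroup A] [AddCommGroup B]
    [AddCommGroup C] [Module R A] [Module R B] [Module R C] [Module.Finite R A]
    [Module.Finite R C] {f : A →ₗ[R] B} {g : B →ₗ[R] C} (h : Function.Exact f g) :
    Module.Finite R B :=
  have := isNoetherian_of_range_eq_ker f g (LinearMap.exact_iff.1 h).symm
  inferInstance

lemma finite_ext_of_iso (X : ModuleCat.{u} R) {M N : ModuleCat.{u} R} (e : M ≅ N) (i : ℕ)
    [Module.Finite R (Ext X M i)] : Module.Finite R (Ext X N i) := by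
  refine Module.Finite.of_surjective
    ((Ext.mk₀ e.hom).postcompOfLinear R X (add_zero i)) fun y ↦
      ⟨y.comp (Ext.mk₀ e.inv) (add_zero i), ?_⟩
  change (y.comp (Ext.mk₀ e.inv) (add_zero i)).comp (Ext.mk₀ e.hom) (add_zero i) = y
  rw [Ext.comp_assoc_of_second_deg_zero, Ext.mk₀_comp_mk₀, e.inv_hom_id, Ext.comp_mk₀_id]

lemma finite_ext_zero_of_mono [IsNoetherianRing R] (X : ModuleCat.{u} R) {M N : ModuleCat.{u} R}
    (f : M ⟶ N) [Mono f] [Module.Finite R (Ext X N 0)] : Module.Finite R (Ext X M 0) :=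
  Module.Finite.of_injective ((Ext.mk₀ f).postcompOfLinear R X (add_zero 0))
    (Ext.postcomp_mk₀_injective_of_mono _ f)

/-- All the modules `Ext^i_R(R/𝔞, M)`, formed with the `Ext` of abelian categories, are finitely
generated. -/
def ExtFinite (𝔞 : Ideal R) (M : ModuleCat.{u} R) : Prop :=
  ∀ i : ℕ, Module.Finite R (Ext (ModuleCat.of R (R ⧸ 𝔞)) M i)

namespace ExtFinite

variable {𝔞 : Ideal R}

lemma congr {M N : Type u} [AddCommGroup M] [AddCommGroup N] [Module R M] [Module R N]
    (h : ExtFinite 𝔞 (ModuleCat.of R M)) (e : M ≃ₗ[R] N) : ExtFinite 𝔞 (ModuleCat.of R N) :=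
  fun i ↦ have := h i; finite_ext_of_iso _ e.toModuleIso i

lemma of_finite [IsNoetherianRing R] (M : Type u) [AddCommGroup M] [Module R M]
    [Module.Finite R M] : ExtFinite 𝔞 (ModuleCat.of R M) :=
  fun _ ↦ ModuleCat.finite_ext _ _ _ _

lemma of_shortExact [IsNoetherianRing R] {S : ShortComplex (ModuleCat.{u} R)} (hS : S.ShortExact)
    (h₁ : ExtFinite 𝔞 S.X₁) (h₃ : ExtFinite 𝔞 S.X₃) : ExtFinite 𝔞 S.X₂ := fun i ↦
  have := h₁ i
  have := h₃ i
  finite_of_exact (exact_postcomp_f_g R hS _ i)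

end ExtFinite

end FiniteExt

section Induction

open Abelian

variable {R : Type u} [CommRing R] [IsNoetherianRing R] (𝔞 : Ideal R)

namespace ExtLimit

/-- The module `H^0_𝔞(M)` is the `𝔞`-torsion submodule of `M`. -/
noncomputable def zeroEquiv (M : ModuleCat.{u} R) : ExtLimit 𝔞 0 M ≃ₗ[R] 𝔞.primaryComponent M :=
  (LinearEquiv.ofInjective (eval 𝔞 M).hom (eval_injective 𝔞 M)).trans
    (LinearEquiv.ofEq _ _ (range_eval 𝔞))

lemma finite_ext_zero (M : ModuleCat.{u} R)
    [Module.Finite R (Ext (ModuleCat.of R (R ⧸ 𝔞)) M 0)] :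
    Module.Finite R (Ext (ModuleCat.of R (R ⧸ 𝔞)) (ExtLimit 𝔞 0 M) 0) :=
  have : Mono (eval 𝔞 M) := (ModuleCat.mono_iff_injective _).2 (eval_injective 𝔞 M)
  finite_ext_zero_of_mono _ (eval 𝔞 M)

lemma exists_degree_shift {t : ℕ} {M : ModuleCat.{u} R}
    (hM : ∀ i ≤ t + 1, Module.Finite R (Ext (ModuleCat.of R (R ⧸ 𝔞)) M i))
    (h0 : ExtFinite 𝔞 (ExtLimit 𝔞 0 M)) :
    ∃ C : ModuleCat.{u} R,
      (∀ i ≤ t, Module.Finite R (Ext (ModuleCat.of R (R ⧸ 𝔞)) C i)) ∧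
      ∀ i, Nonempty (ExtLimit 𝔞 i C ≃ₗ[R] ExtLimit 𝔞 (i + 1) M) := by
  obtain ⟨C, hC⟩ := exists_dimension_shift (M := ModuleCat.of R (M ⧸ 𝔞.primaryComponent M))
    (primaryComponent_quotient_eq_bot (𝔞 := 𝔞) (M := M))
  let S := quotientSequence (𝔞.primaryComponent M)
  have hS : S.ShortExact := shortExact_quotientSequence _
  have hΓ : ExtFinite 𝔞 S.X₁ := h0.congr (zeroEquiv 𝔞 M)
  refine ⟨C, fun i hi ↦ ?_, fun i ↦ ?_⟩
  · have := hM (i + 1) (Nat.succ_le_succ hi)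
    have := hΓ (i + 2)
    have : Module.Finite R (Ext (ModuleCat.of R (R ⧸ 𝔞)) S.X₃ (i + 1)) :=
      finite_of_exact (exact_postcomp_g_extClass R hS _ (i + 1))
    obtain ⟨e⟩ := (hC i).1
    exact Module.Finite.equiv e.symm
  · obtain ⟨e⟩ := (hC i).2
    exact ⟨e.trans (torsionQuotientEquiv 𝔞 M i).symm⟩

theorem extFinite_and_finite_ext_zero (t : ℕ) (M : ModuleCat.{u} R)
    (hM : ∀ i ≤ t, Module.Finite R (Ext (ModuleCat.of R (R ⧸ 𝔞)) M i))
    (h : ∀ i < t, Module.Finite R (Ext (ModuleCat.of R (R ⧸ 𝔞)) (ExtLimit 𝔞 i M) 0) →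
      ExtFinite 𝔞 (ExtLimit 𝔞 i M)) :
    (∀ i < t, ExtFinite 𝔞 (ExtLimit 𝔞 i M)) ∧
      Module.Finite R (Ext (ModuleCat.of R (R ⧸ 𝔞)) (ExtLimit 𝔞 t M) 0) := by
  have := hM 0 t.zero_le
  have hom_finite := finite_ext_zero 𝔞 M
  induction t generalizing M with
  | zero => exact ⟨fun i hi ↦ absurd hi i.not_lt_zero, hom_finite⟩
  | succ t ih =>
    have h0 := h 0 t.succ_pos hom_finite
    obtain ⟨C, hC, e⟩ := exists_degree_shift 𝔞 hM h0
    have := hC 0 t.zero_le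
    obtain ⟨extFinite_C, hom_finite_C⟩ := ih C hC
      (fun i hi hfin ↦ (h (i + 1) (Nat.succ_lt_succ hi)
        (finite_ext_of_iso _ (e i).some.toModuleIso 0)).congr (e i).some.symm)
      this (finite_ext_zero 𝔞 C)
    refine ⟨fun i hi ↦ ?_, finite_ext_of_iso _ (e t).some.toModuleIso 0⟩
    cases i with
    | zero => exact h0
    | succ i => exact (extFinite_C i (Nat.lt_of_succ_lt_succ hi)).congr (e i).some

end ExtLimit

end Induction

section Melkersson

lemma exists_forall_ge_eq_of_antitone {α : Type*} [PartialOrder α] [WellFoundedLT α]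
    {f : ℕ → α} (hf : Antitone f) : ∃ N, ∀ n ≥ N, f n = f N :=
  (WellFoundedGT.monotone_chain_condition (α := αᵒᵈ) ⟨f, hf⟩).imp fun _ hN n hn ↦ (hN n hn).symm

lemma exists_forall_ge_eq_of_antitone_prod {α : Type*} [PartialOrder α] [WellFoundedLT α]
    {f : ℕ × ℕ → α} (hf : Antitone f) : ∃ N, ∀ n ≥ N, ∀ k, f (k, n) = f (k, N) := by
  obtain ⟨D, hD⟩ := exists_forall_ge_eq_of_antitone (f := fun n ↦ f (n, n))
    fun m n h ↦ hf ⟨h, h⟩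
  have row (k : ℕ) : ∃ N, ∀ n ≥ N, f (k, n) = f (k, N) :=
    exists_forall_ge_eq_of_antitone fun m n h ↦ hf ⟨le_rfl, h⟩
  choose S hS using row
  have corner (k n : ℕ) (hk : D ≤ k) (hn : D ≤ n) : f (k, n) = f (D, D) :=
    (hf ⟨hk, hn⟩).antisymm <| (hD (max k n) (hk.trans (le_max_left _ _))).symm.trans_le
      (hf ⟨le_max_left _ _, le_max_right _ _⟩)
  refine ⟨D ⊔ (Finset.range D).sup S, fun n hn k ↦ ?_⟩
  have hDn : D ≤ D ⊔ (Finset.range D).sup S := le_sup_left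
  rcases lt_or_ge k D with hk | hk
  · have hSk : S k ≤ D ⊔ (Finset.range D).sup S :=
      (Finset.le_sup (Finset.mem_range.2 hk)).trans le_sup_right
    exact (hS k n (hSk.trans hn)).trans (hS k _ hSk).symm
  · exact (corner k n hk (hDn.trans hn)).trans (corner k _ hk hDn).symm

variable {R : Type*} [CommRing R] {M : Type*} [AddCommGroup M] [Module R M]

lemma isArtinian_of_supportDim_le_zero [IsNoetherianRing R] [Module.Finite R M]
    (h : Module.supportDim R M ≤ 0) : IsArtinian R M := by
  let A := R ⧸ Module.annihilator R M
  rw [Module.supportDim_eq_ringKrullDim_quotient_annihilator] at h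
  have : Ring.KrullDimLE 0 A := Ring.krullDimLE_iff.2 h
  have : IsArtinianRing A := IsNoetherianRing.isArtinianRing_of_krullDimLE_zero
  let _ : Module A M := Module.quotientAnnihilator
  have : IsScalarTower R A M := (Module.isTorsionBySet_annihilator R M).isScalarTower
  have : Module.Finite A M := Module.Finite.of_restrictScalars_finite R A M
  exact isArtinian_of_surjective_algebraMap (S := R) (R := A) Ideal.Quotient.mk_surjective

/-- The submodule `x^k (L ∩ (0 :_M x^{k+1}))` of `(0 :_M x)`. For fixed `x`, these layers play
the role of the graded pieces of `L` with respect to the filtration by the `(0 :_M x^k)`. -/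
def torsionLayer (x : R) (k : ℕ) (L : Submodule R M) : Submodule R (Submodule.torsionBy R M x) :=
  Submodule.comap (Submodule.subtype _)
    (Submodule.map (LinearMap.lsmul R M (x ^ k)) (L ⊓ Submodule.torsionBy R M (x ^ (k + 1))))

lemma mem_torsionLayer {x : R} {k : ℕ} {L : Submodule R M} {m : Submodule.torsionBy R M x} :
    m ∈ torsionLayer x k L ↔ ∃ y ∈ L, x ^ (k + 1) • y = 0 ∧ x ^ k • y = m := by
  simp [torsionLayer, and_assoc]

lemma torsionLayer_mono {x : R} {k l : ℕ} (hkl : k ≤ l) {L L' : Submodule R M} (h : L ≤ L') :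
    torsionLayer x l L ≤ torsionLayer x k L' := by
  intro m hm
  obtain ⟨y, hy, hy0, hym⟩ := mem_torsionLayer.1 hm
  obtain ⟨d, rfl⟩ := Nat.exists_eq_add_of_le hkl
  refine mem_torsionLayer.2 ⟨x ^ d • y, L'.smul_mem _ (h hy), ?_, ?_⟩
  · rwa [smul_smul, ← pow_add, add_right_comm]
  · rwa [smul_smul, ← pow_add]

lemma le_of_torsionLayer_le {x : R} (hx : ∀ m : M, ∃ n : ℕ, x ^ n • m = 0)
    {L L' : Submodule R M} (hL : L ≤ L')
    (h : ∀ k, torsionLayer x k L' ≤ torsionLayer x k L) : L' ≤ L := by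
  suffices ∀ n : ℕ, ∀ y ∈ L', x ^ n • y = 0 → y ∈ L from fun y hy ↦ (hx y).elim (this · y hy)
  intro n
  induction n with
  | zero =>
    intro y _ hy0
    rw [pow_zero, one_smul] at hy0
    exact hy0 ▸ L.zero_mem
  | succ k ih =>
    intro y hy hy0
    have hxy : x ^ k • y ∈ Submodule.torsionBy R M x := by
      rwa [Submodule.mem_torsionBy_iff, smul_smul, ← pow_succ']
    obtain ⟨z, hz, _, hzy⟩ := mem_torsionLayer.1
      (h k ((mem_torsionLayer (m := ⟨_, hxy⟩)).2 ⟨y, hy, hy0, rfl⟩))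
    have hyz : y - z ∈ L := ih (y - z) (L'.sub_mem hy (hL hz)) (by rw [smul_sub, hzy, sub_self])
    exact (L.sub_mem_iff_left hz).1 hyz

lemma isArtinian_of_isArtinian_torsionBy {x : R} (hx : ∀ m : M, ∃ n : ℕ, x ^ n • m = 0)
    [IsArtinian R (Submodule.torsionBy R M x)] : IsArtinian R M := by
  refine monotone_stabilizes_iff_artinian.1 fun f ↦ ?_
  let L (n : ℕ) : Submodule R M := (f n).ofDual
  have hL {m n : ℕ} (h : m ≤ n) : L n ≤ L m := f.monotone h
  obtain ⟨N, hN⟩ := exists_forall_ge_eq_of_antitone_prod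
    (f := fun p ↦ torsionLayer x p.1 (L p.2)) fun p q h ↦ torsionLayer_mono h.1 (hL h.2)
  refine ⟨N, fun n hn ↦ ?_⟩
  have hLn : L N ≤ L n := le_of_torsionLayer_le hx (hL hn) fun k ↦ (hN n hn k).ge
  exact hLn.antisymm (hL hn)

theorem isArtinian_of_isArtinian_torsionBySet {s : Set R} (hs : s.Finite) (M : Type*)
    [AddCommGroup M] [Module R M] (h : ∀ x ∈ s, ∀ m : M, ∃ n : ℕ, x ^ n • m = 0)
    [IsArtinian R (Submodule.torsionBySet R M s)] : IsArtinian R M := by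
  induction s, hs using Set.Finite.induction_on generalizing M with
  | empty =>
    exact isArtinian_of_surjective _ (Submodule.torsionBySet R M ∅).subtype fun m ↦
      ⟨⟨m, by simp⟩, rfl⟩
  | @insert x s _ _ ih =>
    let K := Submodule.torsionBy R M x
    let f : Submodule.torsionBySet R K s →ₗ[R] Submodule.torsionBySet R M (insert x s) :=
      (K.subtype ∘ₗ Submodule.subtype _).codRestrict _ fun m ↦
        (Submodule.mem_torsionBySet_iff _ _).2 <| by
          rintro ⟨a, rfl | ha⟩
          · exact m.1.2
          · exact congrArg Subtype.val ((Submodule.mem_torsionBySet_iff _ _).1 m.2 ⟨a, ha⟩)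
    have f_injective : Function.Injective f := fun m n hmn ↦
      Subtype.ext (Subtype.ext (congrArg (fun y ↦ y.1) hmn))
    have := isArtinian_of_injective f f_injective
    have : IsArtinian R K := ih K fun a ha m ↦
      (h a (Set.mem_insert_of_mem x ha) m).imp fun n hn ↦ Subtype.ext hn
    exact isArtinian_of_isArtinian_torsionBy (h x (Set.mem_insert x s))

end Melkersson

section TorsionFDZero

open Abelian

variable {R : Type u} [CommRing R] {𝔞 : Ideal R} {M N : Type u} [AddCommGroup M] [Module R M]
  [AddCommGroup N] [Module R N]

namespace IsTorsionIdeal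

lemma exists_pow_smul_eq_zero (hM : IsTorsionIdeal 𝔞 M) {x : R} (hx : x ∈ 𝔞) (m : M) :
    ∃ n : ℕ, x ^ n • m = 0 :=
  (hM m).imp fun n hn ↦ hn _ (Ideal.pow_mem_pow hx n)

lemma isArtinian [IsNoetherianRing R] (hM : IsTorsionIdeal 𝔞 M)
    [IsArtinian R (Submodule.torsionBySet R M 𝔞)] : IsArtinian R M := by
  obtain ⟨s, rfl⟩ := IsNoetherian.noetherian 𝔞
  have : IsArtinian R (Submodule.torsionBySet R M (s : Set R)) := by
    rw [Submodule.torsionBySet_eq_torsionBySet_span]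
    infer_instance
  exact isArtinian_of_isArtinian_torsionBySet s.finite_toSet M fun x hx m ↦
    hM.exists_pow_smul_eq_zero (Ideal.subset_span hx) m

end IsTorsionIdeal

lemma finite_torsionBySet_of_finite_ext_zero [IsNoetherianRing R]
    (h : Module.Finite R (Ext (ModuleCat.of R (R ⧸ 𝔞)) (ModuleCat.of R M) 0)) :
    Module.Finite R (Submodule.torsionBySet R M 𝔞) := by
  have hle : Submodule.torsionBySet R M 𝔞 ≤ LinearMap.range (extEvalOne 𝔞 (ModuleCat.of R M)) :=
    fun m hm ↦ exists_extEvalOne_eq 𝔞 fun a ha ↦ (Submodule.mem_torsionBySet_iff _ _).1 hm ⟨a, ha⟩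
  have := Module.Finite.range (extEvalOne 𝔞 (ModuleCat.of R M))
  exact Module.Finite.of_injective (Submodule.inclusion hle) (Submodule.inclusion_injective hle)

namespace ExtFinite

lemma of_submodule_of_quotient [IsNoetherianRing R] (K : Submodule R M)
    (hK : ExtFinite 𝔞 (ModuleCat.of R K)) (hQ : ExtFinite 𝔞 (ModuleCat.of R (M ⧸ K))) :
    ExtFinite 𝔞 (ModuleCat.of R M) :=
  of_shortExact (shortExact_quotientSequence (M := ModuleCat.of R M) K) hK hQ

lemma of_ker_of_range [IsNoetherianRing R] (f : M →ₗ[R] N)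
    (hker : ExtFinite 𝔞 (ModuleCat.of R (LinearMap.ker f)))
    (hrange : ExtFinite 𝔞 (ModuleCat.of R (LinearMap.range f))) :
    ExtFinite 𝔞 (ModuleCat.of R M) :=
  of_submodule_of_quotient _ hker (hrange.congr f.quotKerEquivRange.symm)

lemma of_surjective_smul {x : R} (hx : x ∈ 𝔞)
    (hs : Function.Surjective (LinearMap.lsmul R M x))
    (hker : ExtFinite 𝔞 (ModuleCat.of R (LinearMap.ker (LinearMap.lsmul R M x)))) :
    ExtFinite 𝔞 (ModuleCat.of R M) := by
  intro i
  let S := (LinearMap.lsmul R M x).shortComplexKer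
  have hS : S.ShortExact := LinearMap.shortExact_shortComplexKer hs
  have := hker i
  have postcomp_g_eq_zero (y : Ext (ModuleCat.of R (R ⧸ 𝔞)) (ModuleCat.of R M) i) :
      y.comp (Ext.mk₀ S.g) (add_zero i) = 0 := by
    have hg : S.g = x • 𝟙 (ModuleCat.of R M) := rfl
    rw [hg, Ext.mk₀_smul, Ext.comp_smul, Ext.comp_mk₀_id]
    exact smul_ext_eq_zero_of_mem y hx
  exact Module.Finite.of_surjective
    ((Ext.mk₀ S.f).postcompOfLinear R (ModuleCat.of R (R ⧸ 𝔞)) (add_zero i)) fun y ↦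
      (exact_postcomp_f_g R hS _ i y).1 (postcomp_g_eq_zero y)

theorem of_isArtinian [IsNoetherianRing R] [IsArtinian R M]
    [Module.Finite R (Submodule.torsionBySet R M 𝔞)] : ExtFinite 𝔞 (ModuleCat.of R M) := by
  suffices ∀ K : Submodule R M, ExtFinite 𝔞 (ModuleCat.of R K) from
    (this ⊤).congr Submodule.topEquiv
  intro K
  induction K using IsArtinian.induction with
  | hgt K ih =>
    have extFinite_of_ne_top (L : Submodule R K) (hL : L ≠ ⊤) : ExtFinite 𝔞 (ModuleCat.of R L) :=
      (ih _ ((Submodule.map_strictMono_of_injective K.subtype_injective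
        (lt_top_iff_ne_top.2 hL)).trans_le (Submodule.map_subtype_le _ _))).congr
        (K.equivSubtypeMap L).symm
    by_cases h : ∀ x ∈ 𝔞, LinearMap.ker (LinearMap.lsmul R K x) = ⊤
    · have hK : K ≤ Submodule.torsionBySet R M 𝔞 := fun m hm ↦
        (Submodule.mem_torsionBySet_iff _ _).2 fun a ↦
          congrArg Subtype.val (LinearMap.congr_fun (LinearMap.ker_eq_top.1 (h a a.2)) ⟨m, hm⟩)
      have : Module.Finite R K :=
        Module.Finite.of_injective (Submodule.inclusion hK) (Submodule.inclusion_injective hK)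
      exact .of_finite K
    · push Not at h
      obtain ⟨x, hx, hker⟩ := h
      by_cases hrange : LinearMap.range (LinearMap.lsmul R K x) = ⊤
      · exact .of_surjective_smul hx (LinearMap.range_eq_top.1 hrange) (extFinite_of_ne_top _ hker)
      · exact .of_ker_of_range _ (extFinite_of_ne_top _ hker) (extFinite_of_ne_top _ hrange)

theorem of_memFD_zero [IsNoetherianRing R] (hM : IsTorsionIdeal 𝔞 M) (hfd : MemFD R 0 M)
    (h : Module.Finite R (Ext (ModuleCat.of R (R ⧸ 𝔞)) (ModuleCat.of R M) 0)) :
    ExtFinite 𝔞 (ModuleCat.of R M) := by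
  obtain ⟨N, hN, hdim⟩ := hfd
  have : Module.Finite R N := Module.Finite.iff_fg.2 hN
  have extFinite_N : ExtFinite 𝔞 (ModuleCat.of R N) := of_finite N
  let S := quotientSequence (M := ModuleCat.of R M) N
  have hS : S.ShortExact := shortExact_quotientSequence _
  have : Module.Finite R (Submodule.torsionBySet R (M ⧸ N) 𝔞) := by
    have := extFinite_N 1
    exact finite_torsionBySet_of_finite_ext_zero
      (finite_of_exact (exact_postcomp_g_extClass R hS (ModuleCat.of R (R ⧸ 𝔞)) 0))
  have : IsArtinian R (Submodule.torsionBySet R (M ⧸ N) 𝔞) := isArtinian_of_supportDim_le_zero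
    ((Module.supportDim_le_of_injective _ (Submodule.subtype_injective _)).trans hdim)
  have : IsArtinian R (M ⧸ N) := (hM.of_surjective N.mkQ N.mkQ_surjective).isArtinian
  exact of_submodule_of_quotient N extFinite_N of_isArtinian

end ExtFinite

end TorsionFDZero

section DimensionOne

variable {R : Type*} [CommRing R]

lemma exists_pow_le_ker_of_mem_minimalPrimes {𝔞 p : Ideal R} (h𝔞 : 𝔞.FG)
    (hp : p ∈ minimalPrimes R) [p.IsPrime] (h : 𝔞 ≤ p) :
    ∃ k : ℕ, 𝔞 ^ k ≤ RingHom.ker (algebraMap R (Localization.AtPrime p)) := by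
  refine Ideal.exists_pow_le_of_le_radical_of_fg (fun x hx ↦ ?_) h𝔞
  have hx' : algebraMap R (Localization.AtPrime p) x ∈
      ((⊥ : Ideal R).map (algebraMap R (Localization.AtPrime p))).radical := by
    rw [IsLocalization.AtPrime.radical_map_of_mem_minimalPrimes _ p ⊥ hp]
    exact Ideal.mem_map_of_mem _ (h hx)
  exact hx'.imp fun k hk ↦ by simpa using hk

lemma exists_notMem_mem_torsionBySet_of_le_ker {J p : Ideal R} (hJ : J.FG) [p.IsPrime]
    (h : J ≤ RingHom.ker (algebraMap R (Localization.AtPrime p))) :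
    ∃ s ∉ p, s ∈ Submodule.torsionBySet R R J := by
  have : Module.Finite R J := Module.Finite.iff_fg.2 hJ
  have notMem_support : (⟨p, inferInstance⟩ : PrimeSpectrum R) ∉ Module.support R J := by
    refine Module.notMem_support_iff'.2 fun m ↦ ?_
    obtain ⟨s, hs⟩ := (IsLocalization.map_eq_zero_iff p.primeCompl
      (Localization.AtPrime p) (m : R)).1 (h m.2)
    exact ⟨s, s.2, Subtype.ext hs⟩
  rw [Module.mem_support_iff_of_finite, SetLike.not_le_iff_exists] at notMem_support
  obtain ⟨s, hs, hsp⟩ := notMem_support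
  refine ⟨s, hsp, (Submodule.mem_torsionBySet_iff _ _).2 fun a ↦ ?_⟩
  rw [smul_eq_mul, mul_comm]
  exact congrArg Subtype.val (Module.mem_annihilator.1 hs a)

section Finiteness

variable {M : Type*} [AddCommGroup M] [Module R M]

lemma smul_mem_torsionBySet {J : Ideal R} {s : R} (hs : s ∈ Submodule.torsionBySet R R J) (m : M) :
    s • m ∈ Submodule.torsionBySet R M J :=
  (Submodule.mem_torsionBySet_iff _ _).2 fun a ↦ by
    rw [smul_smul, ← smul_eq_mul, (Submodule.mem_torsionBySet_iff _ _).1 hs a, zero_smul]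

variable (M) in
lemma exists_forall_torsionBySet_pow_le [IsNoetherian R M] (𝔞 : Ideal R) :
    ∃ n : ℕ, ∀ k, Submodule.torsionBySet R M (𝔞 ^ k : Ideal R) ≤
      Submodule.torsionBySet R M (𝔞 ^ n : Ideal R) := by
  obtain ⟨n, hn⟩ := monotone_stabilizes_iff_noetherian.2 (inferInstance : IsNoetherian R M)
    ⟨fun n ↦ Submodule.torsionBySet R M (𝔞 ^ n : Ideal R),
      fun i j h ↦ Submodule.torsionBySet_le_torsionBySet_pow i j h 𝔞⟩
  exact ⟨n, fun k ↦ (Submodule.torsionBySet_le_torsionBySet_pow k (max n k)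
    (le_max_right n k) 𝔞).trans (hn _ (le_max_left n k)).ge⟩

lemma finite_torsionBySet_mul [IsNoetherianRing R] (I J : Ideal R)
    [Module.Finite R (Submodule.torsionBySet R M I)]
    [hJ : Module.Finite R (Submodule.torsionBySet R M J)] :
    Module.Finite R (Submodule.torsionBySet R M (I * J : Ideal R)) := by
  obtain ⟨s, rfl⟩ := IsNoetherian.noetherian J
  rw [← Submodule.torsionBySet_eq_torsionBySet_span] at hJ
  let T := Submodule.torsionBySet R M (I * Ideal.span (s : Set R) : Ideal R)
  let f : T →ₗ[R] s → Submodule.torsionBySet R M I := LinearMap.pi fun x ↦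
    (LinearMap.lsmul R M x ∘ₗ T.subtype).codRestrict _ fun m ↦
      (Submodule.mem_torsionBySet_iff _ _).2 fun a ↦
        (smul_smul (a : R) (x : R) (m : M)).trans <| (Submodule.mem_torsionBySet_iff _ _).1 m.2
          ⟨a * x, Ideal.mul_mem_mul a.2 (Ideal.subset_span x.2)⟩
  let g : LinearMap.ker f →ₗ[R] Submodule.torsionBySet R M (s : Set R) :=
    (T.subtype ∘ₗ Submodule.subtype _).codRestrict _ fun m ↦
      (Submodule.mem_torsionBySet_iff _ _).2 fun x ↦
        congrArg Subtype.val (congrFun (LinearMap.mem_ker.1 m.2) x)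
  have : Module.Finite R (LinearMap.ker f) := Module.Finite.of_injective g fun m n hmn ↦
    Subtype.ext (Subtype.ext (congrArg (fun y ↦ y.1) hmn))
  exact finite_of_exact (LinearMap.exact_subtype_ker_map f)

lemma finite_torsionBySet_pow [IsNoetherianRing R] (𝔞 : Ideal R)
    [Module.Finite R (Submodule.torsionBySet R M 𝔞)] (n : ℕ) :
    Module.Finite R (Submodule.torsionBySet R M (𝔞 ^ n : Ideal R)) := by
  induction n with
  | zero =>
    rw [pow_zero, Ideal.one_eq_top, Submodule.top_coe, Submodule.torsionBySet_univ]
    infer_instance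
  | succ n ih =>
    rw [pow_succ]
    exact finite_torsionBySet_mul _ _

lemma supportDim_le_zero_of_forall_notMem_minimalPrimes (hR : ringKrullDim R ≤ 1)
    (h : ∀ p ∈ Module.support R M, p.asIdeal ∉ minimalPrimes R) : Module.supportDim R M ≤ 0 := by
  have : Ring.KrullDimLE 1 R := Ring.krullDimLE_iff.2 (by exact_mod_cast hR)
  refine Order.krullDim_nonpos_iff_forall_isMax.2 fun p ↦ isMax_iff_forall_not_lt.2 fun q hpq ↦ ?_
  have hmax := (Ring.krullDimLE_one_iff.1 this _ p.1.2).resolve_left (h p.1 p.2)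
  exact q.1.2.ne_top (hmax.1.2 _ hpq)

end Finiteness

end DimensionOne

section FDZero

variable {R : Type u} [CommRing R] {𝔞 : Ideal R} {M N : Type u} [AddCommGroup M] [Module R M]
  [AddCommGroup N] [Module R N]

lemma IsTorsionIdeal.support_subset (hM : IsTorsionIdeal 𝔞 M) :
    Module.support R M ⊆ PrimeSpectrum.zeroLocus (𝔞 : Set R) := by
  intro p hp a ha
  obtain ⟨m, hm⟩ := Module.mem_support_iff'.1 hp
  by_contra hap
  obtain ⟨n, hn⟩ := hM.exists_pow_smul_eq_zero ha m
  exact hm (a ^ n) (fun h ↦ hap (p.2.mem_of_pow_mem n h)) hn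

lemma notMem_minimalPrimes_of_mem_support_quotient [IsNoetherianRing R] (hM : IsTorsionIdeal 𝔞 M)
    {n : ℕ} (hn : ∀ k, Submodule.torsionBySet R R (𝔞 ^ k : Ideal R) ≤
      Submodule.torsionBySet R R (𝔞 ^ n : Ideal R)) {p : PrimeSpectrum R}
    (hp : p ∈ Module.support R (M ⧸ Submodule.torsionBySet R M (𝔞 ^ n : Ideal R))) :
    p.asIdeal ∉ minimalPrimes R := by
  intro hmin
  have h𝔞p : 𝔞 ≤ p.asIdeal := (hM.of_surjective _ (Submodule.mkQ_surjective _)).support_subset hp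
  obtain ⟨k, hk⟩ :=
    exists_pow_le_ker_of_mem_minimalPrimes (IsNoetherian.noetherian 𝔞) hmin h𝔞p
  obtain ⟨s, hsp, hs⟩ := exists_notMem_mem_torsionBySet_of_le_ker (IsNoetherian.noetherian _) hk
  refine Module.notMem_support_iff'.2 (fun m ↦ ⟨s, hsp, ?_⟩) hp
  obtain ⟨m, rfl⟩ := Submodule.mkQ_surjective _ m
  exact (Submodule.Quotient.mk_eq_zero _).2 (smul_mem_torsionBySet (hn k hs) m)

namespace MemFD

lemma of_moduleDim_le {n : ℕ} (h : moduleDim R M ≤ n) : MemFD R n M :=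
  ⟨⊥, Submodule.fg_bot, (Module.supportDim_le_of_surjective (Submodule.mkQ ⊥)
    (Submodule.mkQ_surjective _)).trans h⟩

lemma congr {n : ℕ} (h : MemFD R n M) (e : M ≃ₗ[R] N) : MemFD R n N := by
  obtain ⟨K, hK, hdim⟩ := h
  exact ⟨K.map e.toLinearMap, hK.map _, (Module.supportDim_eq_of_equiv
    (Submodule.Quotient.equiv K _ e rfl)).symm.le.trans hdim⟩

theorem of_ringKrullDim_le_one [IsNoetherianRing R] (hR : ringKrullDim R ≤ 1)
    (hM : IsTorsionIdeal 𝔞 M) [Module.Finite R (Submodule.torsionBySet R M 𝔞)] :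
    MemFD R 0 M := by
  obtain ⟨n, hn⟩ := exists_forall_torsionBySet_pow_le R 𝔞
  exact ⟨Submodule.torsionBySet R M (𝔞 ^ n : Ideal R),
    Module.Finite.iff_fg.1 (finite_torsionBySet_pow 𝔞 n),
    supportDim_le_zero_of_forall_notMem_minimalPrimes hR fun _ ↦
      notMem_minimalPrimes_of_mem_support_quotient hM hn⟩

end MemFD

end FDZero

section Cofiniteness

open Abelian Opposite

variable {R : Type u} [CommRing R] {𝔞 : Ideal R} {M : ModuleCat.{u} R}

variable (𝔞 M) in
/-- Comparison of `Ext` computed from projective resolutions with the derived-category `Ext`. -/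
noncomputable def extIdealEquiv (i : ℕ) :
    extIdeal 𝔞 i M ≃ₗ[R] Ext (ModuleCat.of R (R ⧸ 𝔞)) M i :=
  ((extIsoExtModuleFunctor R i M).app (op (ModuleCat.of R (R ⧸ 𝔞)))).toLinearEquiv

lemma ExtFinite.isCofinite (hM : ExtFinite 𝔞 M) (htors : IsTorsionIdeal 𝔞 M) :
    IsCofinite 𝔞 M :=
  ⟨htors.support_subset, fun i ↦
    have := hM i
    Module.Finite.equiv (extIdealEquiv 𝔞 M i).symm⟩

lemma finite_linearMap_of_finite_ext_zero {N : ModuleCat.{u} R} [Module.Finite R (Ext N M 0)] :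
    Module.Finite R (N →ₗ[R] M) :=
  Module.Finite.equiv (Ext.linearEquiv₀.trans (ModuleCat.homLinearEquiv (S := R)))

end Cofiniteness

theorem localCohomology_isCofinite_of_memFD_zero_general
    {R : Type u} [CommRing R] [IsNoetherianRing R] (𝔞 : Ideal R) (t : ℕ) (M : ModuleCat.{u} R)
    (hext : ∀ i ≤ t, Module.Finite R (extIdeal 𝔞 i M))
    (h : (∀ i < t, MemFD R 0 ((localCohomology 𝔞 i).obj M)) ∨ ringKrullDim R ≤ 1) :
    (∀ i < t, IsCofinite 𝔞 ((localCohomology 𝔞 i).obj M)) ∧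
      Module.Finite R ((R ⧸ 𝔞) →ₗ[R] ((localCohomology 𝔞 t).obj M)) := by
  let e (i : ℕ) : (localCohomology 𝔞 i).obj M ≃ₗ[R] ExtLimit 𝔞 i M :=
    (localCohomologyIsoExtLimit 𝔞 i M).toLinearEquiv
  have htors (i : ℕ) : IsTorsionIdeal 𝔞 (ExtLimit 𝔞 i M) := ExtLimit.isTorsionIdeal 𝔞 i M
  have hM (i : ℕ) (hi : i ≤ t) : Module.Finite R (Abelian.Ext (ModuleCat.of R (R ⧸ 𝔞)) M i) :=
    have := hext i hi
    Module.Finite.equiv (extIdealEquiv 𝔞 M i)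
  have memFD_zero (i : ℕ) (hi : i < t) (hfin : Module.Finite R
      (Abelian.Ext (ModuleCat.of R (R ⧸ 𝔞)) (ExtLimit 𝔞 i M) 0)) :
      MemFD R 0 (ExtLimit 𝔞 i M) := by
    have : Module.Finite R (Submodule.torsionBySet R (ExtLimit 𝔞 i M) 𝔞) :=
      finite_torsionBySet_of_finite_ext_zero hfin
    exact h.elim (fun hfd ↦ (hfd i hi).congr (e i)) fun hR ↦ .of_ringKrullDim_le_one hR (htors i)
  obtain ⟨extFinite, finite_ext_zero⟩ := ExtLimit.extFinite_and_finite_ext_zero 𝔞 t M hM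
    fun i hi hfin ↦ .of_memFD_zero (htors i) (memFD_zero i hi hfin) hfin
  refine ⟨fun i hi ↦ ((extFinite i hi).congr (e i).symm).isCofinite
    ((htors i).of_injective (e i).toLinearMap (e i).injective), ?_⟩
  have : Module.Finite R ((R ⧸ 𝔞) →ₗ[R] ExtLimit 𝔞 t M) :=
    finite_linearMap_of_finite_ext_zero (N := ModuleCat.of R (R ⧸ 𝔞))
  exact Module.Finite.equiv (LinearEquiv.congrRight (e t).symm)

/-- Yang–Shen, Proposition 4.1(1) (module case): let `𝔞` be a proper ideal of a noetherian
ring `R`, `t ≥ 0`, and `M` an `R`-module with `Ext^i_R(R/𝔞, M)` finitely generated for all `i`.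
If `H^i_𝔞(M) ∈ FD_{≤0}` for all `i < t` (in particular if `dim_R H^i_𝔞(M) ≤ 0` for all `i < t`,
or if `dim R ≤ 1`), then `H^i_𝔞(M)` is `𝔞`-cofinite for all `i < t` and
`Hom_R(R/𝔞, H^t_𝔞(M))` is finitely generated. -/
theorem localCohomology_isCofinite_of_memFD_zero
    {R : Type u} [CommRing R] [IsNoetherianRing R] (𝔞 : Ideal R) (ha : 𝔞 ≠ ⊤) (t : ℕ)
    (M : ModuleCat.{u} R) (hext : ∀ i : ℕ, Module.Finite R (extIdeal 𝔞 i M))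
    (h : (∀ i : ℕ, i < t → MemFD R 0 ((localCohomology 𝔞 i).obj M)) ∨
      (∀ i : ℕ, i < t → moduleDim R ((localCohomology 𝔞 i).obj M) ≤ 0) ∨
      ringKrullDim R ≤ 1) :
    (∀ i : ℕ, i < t → IsCofinite 𝔞 ((localCohomology 𝔞 i).obj M)) ∧
      Module.Finite R ((R ⧸ 𝔞) →ₗ[R] ((localCohomology 𝔞 t).obj M)) :=
  localCohomology_isCofinite_of_memFD_zero_general 𝔞 t M (fun i _ ↦ hext i) <|
    h.elim .inl <| Or.imp_left fun hdim i hi ↦ .of_moduleDim_le (hdim i hi)
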